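/- arXiv:2406.02675 — 3 statements merged into one kernel-verified Lean document; each statement's English description precedes it below -/
import Mathlib

section
/- Let M_0 be a particle-number-conserving Markov generator with normalized stationary states S_0, ..., S_L as in the context, and assume B_N ≠ 0 for every 1 ≤ N ≤ L. Define p_0 = 1, p_N = ∏_{i=1}^{N} (A_L − A_{i−1})/B_i for 1 ≤ N ≤ L, and S = ∑_{N=0}^{L} p_N S_N. Then M_0 S = 0 and, for every 0 ≤ N ≤ L, ∑_{A ∈ W_N} (H S)(A) = 0. (Thus S, after normalization, is the stationary state of M_0 + εH at leading order in ε.) -/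
/-!
Pairing `H f` with a function `u` of the particle number moves `H` onto `u`, where it acts by
discrete differences: adsorption contributes `u (n + 1) - u n`, desorption `u (n - 1) - u n`.
Averaging over the normalized state `S_n` therefore leaves the birth-death chain on particle
numbers with birth rate `A_L - A_n` and death rate `B_n`. The weights `p_n` are in detailed balance
for this chain, so the pairing of `H S` with every `u` telescopes to zero; the sum of `H S` over the
sector `W_N` is the pairing with the indicator of `N`.
-/

open Finset

/-- The set of sites `{1, ..., L}`. -/
def sites (L : ℕ) : Finset ℕ := Finset.Icc 1 L

/-- `W L N` : the collection of `N`-element subsets of `{1, ..., L}`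
(the `N`-particle sector). -/
def W (L N : ℕ) : Finset (Finset ℕ) := Finset.powersetCard N (sites L)

/-- The adsorption/desorption generator `H` with adsorption rates `α i` and
desorption rates `β i`: `H (B ∪ {i}) B = α i` for `i ∉ B`,
`H (B \ {i}) B = β i` for `i ∈ B`,
`H B B = -(∑_{i ∉ B} α i + ∑_{i ∈ B} β i)`, all other entries zero. -/
noncomputable def Hmat (L : ℕ) (α β : ℕ → ℝ) (A B : Finset ℕ) : ℝ :=
  if A = B then -((∑ i ∈ sites L \ B, α i) + ∑ i ∈ B, β i)
  else if B ⊆ A ∧ (A \ B).card = 1 then ∑ i ∈ A \ B, α i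
  else if A ⊆ B ∧ (B \ A).card = 1 then ∑ i ∈ B \ A, β i
  else 0

/-- The action of `H` on functions on configurations: `(Hf)(A) = ∑_B H(A,B) f(B)`. -/
noncomputable def Hact (L : ℕ) (α β : ℕ → ℝ) (f : Finset ℕ → ℝ) (A : Finset ℕ) : ℝ :=
  ∑ B ∈ (sites L).powerset, Hmat L α β A B * f B

/-- `secExp L γ S N = ∑_{B ∈ W_N} S_N(B) ∑_{i ∈ B} γ i`, the sector-`N` expectation of the
total rate `γ` under the stationary state `S N` (this gives `A_N` for `γ = α` and `B_N`
for `γ = β`). -/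
noncomputable def secExp (L : ℕ) (γ : ℕ → ℝ) (S : ℕ → Finset ℕ → ℝ) (N : ℕ) : ℝ :=
  ∑ B ∈ W L N, S N B * ∑ i ∈ B, γ i

/-- `pWeight L α β S N = ∏_{i=1}^N (A_L − A_{i−1})/B_i`. -/
noncomputable def pWeight (L : ℕ) (α β : ℕ → ℝ) (S : ℕ → Finset ℕ → ℝ) (N : ℕ) : ℝ :=
  ∏ i ∈ Finset.Icc 1 N, (secExp L α S L - secExp L α S (i - 1)) / secExp L β S i

section Generator

variable {ι R : Type*} [DecidableEq ι]

/-- The generator of adsorption (rates `α`) and desorption (rates `β`) on a finite set `Λ` of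
sites; for `Λ = sites L` it is `Hmat L α β`. Columns are indexed by the configuration before a
jump, so that the matrix acts on distributions. -/
def adsorptionDesorption [AddCommGroup R] (Λ : Finset ι) (α β : ι → R) (A B : Finset ι) : R :=
  if A = B then -((∑ i ∈ Λ \ B, α i) + ∑ i ∈ B, β i)
  else if B ⊆ A ∧ #(A \ B) = 1 then ∑ i ∈ A \ B, α i
  else if A ⊆ B ∧ #(B \ A) = 1 then ∑ i ∈ B \ A, β i
  else 0

theorem eq_insert_iff_sdiff_eq_singleton {A B : Finset ι} {i : ι} (hi : i ∉ B) :
    A = insert i B ↔ B ⊆ A ∧ A \ B = {i} := by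
  constructor
  · rintro rfl
    exact ⟨subset_insert i B, insert_sdiff_cancel hi⟩
  · rintro ⟨hBA, hAB⟩
    rw [← sdiff_union_of_subset hBA, hAB, insert_eq]

theorem sum_ite_eq_insert [AddCommMonoid R] {Λ A : Finset ι} (hA : A ⊆ Λ) (B : Finset ι)
    (α : ι → R) :
    (∑ i ∈ Λ \ B, if A = insert i B then α i else 0) =
      if B ⊆ A ∧ #(A \ B) = 1 then ∑ i ∈ A \ B, α i else 0 := by
  rw [sum_congr rfl fun i hi ↦
    if_congr (eq_insert_iff_sdiff_eq_singleton (mem_sdiff.1 hi).2) rfl rfl]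
  split_ifs with h
  · obtain ⟨hBA, hcard⟩ := h
    obtain ⟨j, hj⟩ := card_eq_one.1 hcard
    have hjΛ : j ∈ Λ \ B := sdiff_subset_sdiff hA le_rfl (hj ▸ mem_singleton_self j)
    simp [hBA, hj, hjΛ]
  · exact sum_eq_zero fun i _ ↦ if_neg fun ⟨hBA, hi⟩ ↦ h ⟨hBA, card_eq_one.2 ⟨i, hi⟩⟩

theorem sum_ite_eq_erase [AddCommMonoid R] (A B : Finset ι) (β : ι → R) :
    (∑ i ∈ B, if A = B.erase i then β i else 0) =
      if A ⊆ B ∧ #(B \ A) = 1 then ∑ i ∈ B \ A, β i else 0 := by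
  rw [← sum_ite_eq_insert Subset.rfl A β]
  have h_iff : ∀ i ∈ B \ A, B = insert i A ↔ A = B.erase i := by grind
  rw [sum_congr rfl fun i hi ↦ if_congr (h_iff i hi) rfl rfl]
  exact (sum_subset sdiff_subset fun i _ hi ↦ if_neg (by grind)).symm

theorem adsorptionDesorption_eq_sum [AddCommGroup R] {Λ A : Finset ι} (hA : A ⊆ Λ) (B : Finset ι)
    (α β : ι → R) :
    adsorptionDesorption Λ α β A B =
      ∑ i ∈ Λ \ B, ((if A = insert i B then α i else 0) - if A = B then α i else 0) +
        ∑ i ∈ B, ((if A = B.erase i then β i else 0) - if A = B then β i else 0) := by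
  rw [sum_sub_distrib, sum_sub_distrib, sum_ite_eq_insert hA, sum_ite_eq_erase,
    adsorptionDesorption]
  by_cases hAB : A = B
  · simp [hAB, add_comm]
  by_cases hBA : B ⊆ A
  · have : ¬A ⊆ B := fun h ↦ hAB (h.antisymm hBA)
    simp [hAB, this]
  · simp [hAB, hBA]

variable [CommRing R]

theorem sum_mul_adsorptionDesorption {Λ B : Finset ι} (hB : B ⊆ Λ) (α β : ι → R)
    (g : Finset ι → R) :
    ∑ A ∈ Λ.powerset, g A * adsorptionDesorption Λ α β A B =
      ∑ i ∈ Λ \ B, α i * (g (insert i B) - g B) + ∑ i ∈ B, β i * (g (B.erase i) - g B) := by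
  have h_pair {C : Finset ι} (hC : C ⊆ Λ) (r : R) :
      ∑ A ∈ Λ.powerset, g A * ((if A = C then r else 0) - if A = B then r else 0) =
        r * (g C - g B) := by
    simp [mul_sub, sum_sub_distrib, hC, hB, mul_comm]
  rw [sum_congr rfl fun A hA ↦ by rw [adsorptionDesorption_eq_sum (mem_powerset.1 hA)]]
  simp only [mul_add, mul_sum, sum_add_distrib]
  rw [sum_comm, sum_comm (t := B)]
  congr 1
  · exact sum_congr rfl fun i hi ↦ h_pair (insert_subset (mem_sdiff.1 hi).1 hB) _
  · exact sum_congr rfl fun i _ ↦ h_pair ((erase_subset i B).trans hB) _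

-- At `B = ∅` the truncated `#B - 1` is harmless, since its coefficient is the empty sum.
theorem sum_card_mul_adsorptionDesorption {Λ B : Finset ι} (hB : B ⊆ Λ) (α β : ι → R)
    (u : ℕ → R) :
    ∑ A ∈ Λ.powerset, u #A * adsorptionDesorption Λ α β A B =
      (∑ i ∈ Λ, α i - ∑ i ∈ B, α i) * (u (#B + 1) - u #B) -
        (∑ i ∈ B, β i) * (u #B - u (#B - 1)) := by
  have h_insert : ∀ i ∈ Λ \ B, α i * (u #(insert i B) - u #B) = α i * (u (#B + 1) - u #B) :=
    fun i hi ↦ by rw [card_insert_of_notMem (mem_sdiff.1 hi).2]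
  have h_erase : ∀ i ∈ B, β i * (u #(B.erase i) - u #B) = β i * (u (#B - 1) - u #B) :=
    fun i hi ↦ by rw [card_erase_of_mem hi]
  rw [sum_mul_adsorptionDesorption hB α β fun A ↦ u #A, sum_congr rfl h_insert,
    sum_congr rfl h_erase, ← sum_mul, ← sum_mul, sum_sdiff_eq_sub hB]
  ring

end Generator

section SectorMean

variable {ι R : Type*}

/-- The average of the total rate `∑ i ∈ B, γ i` over the `N`-particle configurations `B`, weighted
by `f`. For `f = S N` these are the numbers `A_N` (with `γ = α`) and `B_N` (with `γ = β`). -/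
def sectorMean [Semiring R] (Λ : Finset ι) (γ : ι → R) (f : Finset ι → R) (N : ℕ) : R :=
  ∑ B ∈ powersetCard N Λ, f B * ∑ i ∈ B, γ i

theorem sectorMean_zero [Semiring R] (Λ : Finset ι) (γ : ι → R) (f : Finset ι → R) :
    sectorMean Λ γ f 0 = 0 := by
  simp [sectorMean]

variable {Λ : Finset ι} {f : Finset ι → R} {n : ℕ}

theorem sum_powerset_eq_sum_powersetCard [Semiring R] (hf : ∀ B ∉ powersetCard n Λ, f B = 0)
    (g : Finset ι → R) :
    ∑ B ∈ Λ.powerset, f B * g B = ∑ B ∈ powersetCard n Λ, f B * g B :=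
  have h_subset : powersetCard n Λ ⊆ Λ.powerset :=
    fun _ hB ↦ mem_powerset.2 (mem_powersetCard.1 hB).1
  (sum_subset h_subset fun B _ hB ↦ by rw [hf B hB, zero_mul]).symm

theorem sectorMean_card [Semiring R] (hf : ∀ B ∉ powersetCard #Λ Λ, f B = 0)
    (hf_sum : ∑ B ∈ Λ.powerset, f B = 1) (γ : ι → R) :
    sectorMean Λ γ f #Λ = ∑ i ∈ Λ, γ i := by
  have hΛ : f Λ = 1 := by
    simpa [powersetCard_self] using
      (sum_powerset_eq_sum_powersetCard hf fun _ ↦ 1).symm.trans (by simpa using hf_sum)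
  simp [sectorMean, powersetCard_self, hΛ]

theorem sum_card_mul_sum_adsorptionDesorption_mul [DecidableEq ι] [CommRing R]
    (hf : ∀ B ∉ powersetCard n Λ, f B = 0) (hf_sum : ∑ B ∈ Λ.powerset, f B = 1)
    (α β : ι → R) (u : ℕ → R) :
    ∑ A ∈ Λ.powerset, u #A * ∑ B ∈ Λ.powerset, adsorptionDesorption Λ α β A B * f B =
      (∑ i ∈ Λ, α i - sectorMean Λ α f n) * (u (n + 1) - u n) -
        sectorMean Λ β f n * (u n - u (n - 1)) := by
  have h_sum : ∑ B ∈ powersetCard n Λ, f B = 1 := by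
    simpa [hf_sum] using (sum_powerset_eq_sum_powersetCard hf fun _ ↦ 1).symm
  calc
    _ = ∑ B ∈ Λ.powerset, f B * ∑ A ∈ Λ.powerset, u #A * adsorptionDesorption Λ α β A B := by
      simp only [mul_sum]
      rw [sum_comm]
      exact sum_congr rfl fun B _ ↦ sum_congr rfl fun A _ ↦ by ring
    _ = ∑ B ∈ powersetCard n Λ, (f B * ((∑ i ∈ Λ, α i) * (u (n + 1) - u n)) -
          f B * (∑ i ∈ B, α i) * (u (n + 1) - u n) -
          f B * (∑ i ∈ B, β i) * (u n - u (n - 1))) := by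
      rw [sum_powerset_eq_sum_powersetCard hf]
      refine sum_congr rfl fun B hB ↦ ?_
      obtain ⟨hBΛ, rfl⟩ := mem_powersetCard.1 hB
      rw [sum_card_mul_adsorptionDesorption hBΛ]
      ring
    _ = _ := by
      rw [sum_sub_distrib, sum_sub_distrib, ← sum_mul, ← sum_mul, ← sum_mul, h_sum, sectorMean,
        sectorMean]
      ring

end SectorMean

theorem sum_range_mul_birthDeath_eq_zero {R : Type*} [Ring R] {p a b : ℕ → R} {L : ℕ}
    (h_balance : ∀ n < L, p (n + 1) * b (n + 1) = p n * a n) (hb : b 0 = 0) (ha : a L = 0)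
    (u : ℕ → R) :
    ∑ n ∈ range (L + 1), p n * (a n * (u (n + 1) - u n) - b n * (u n - u (n - 1))) = 0 := by
  simp only [mul_sub (p _), ← mul_assoc, sum_sub_distrib]
  rw [sub_eq_zero, sum_range_succ, sum_range_succ' (fun n ↦ p n * b n * _), ha, hb]
  simp only [mul_zero, zero_mul, add_zero, Nat.add_sub_cancel]
  exact sum_congr rfl fun n hn ↦ by rw [h_balance n (mem_range.1 hn)]

section Mixture

variable {ι 𝕜 : Type*} [Field 𝕜]

/-- The weights `p_N` of the sectors, where `L = #Λ`. Up to normalization they are the stationary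
weights of the birth-death chain with birth rates `A_L - A_N` and death rates `B_N`. -/
def sectorWeight (Λ : Finset ι) (α β : ι → 𝕜) (S : ℕ → Finset ι → 𝕜) (N : ℕ) : 𝕜 :=
  ∏ i ∈ Icc 1 N, (sectorMean Λ α (S #Λ) #Λ - sectorMean Λ α (S (i - 1)) (i - 1)) /
    sectorMean Λ β (S i) i

theorem sectorWeight_succ_mul {Λ : Finset ι} (α : ι → 𝕜) {β : ι → 𝕜} {S : ℕ → Finset ι → 𝕜}
    {n : ℕ} (hβ : sectorMean Λ β (S (n + 1)) (n + 1) ≠ 0) :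
    sectorWeight Λ α β S (n + 1) * sectorMean Λ β (S (n + 1)) (n + 1) =
      sectorWeight Λ α β S n * (sectorMean Λ α (S #Λ) #Λ - sectorMean Λ α (S n) n) := by
  rw [sectorWeight, prod_Icc_succ_top (Nat.le_add_left 1 n), ← sectorWeight, Nat.add_sub_cancel,
    mul_assoc, div_mul_cancel₀ _ hβ]

/-- The combination `∑ N, p_N S_N` of the states `S N` of all sectors. -/
def sectorMixture (Λ : Finset ι) (α β : ι → 𝕜) (S : ℕ → Finset ι → 𝕜) (B : Finset ι) : 𝕜 :=
  ∑ N ∈ range (#Λ + 1), sectorWeight Λ α β S N * S N B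

variable {Λ : Finset ι} {S : ℕ → Finset ι → 𝕜}

theorem sum_mul_sectorMixture (α β : ι → 𝕜) (k : Finset ι → 𝕜) :
    ∑ B ∈ Λ.powerset, k B * sectorMixture Λ α β S B =
      ∑ N ∈ range (#Λ + 1), sectorWeight Λ α β S N * ∑ B ∈ Λ.powerset, k B * S N B := by
  simp only [sectorMixture, mul_sum]
  rw [sum_comm]
  exact sum_congr rfl fun N _ ↦ sum_congr rfl fun B _ ↦ mul_left_comm _ _ _

variable [DecidableEq ι]

theorem sum_card_mul_adsorptionDesorption_sectorMixture {α β : ι → 𝕜}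
    (hS_supp : ∀ N ≤ #Λ, ∀ B ∉ powersetCard N Λ, S N B = 0)
    (hS_sum : ∀ N ≤ #Λ, ∑ B ∈ Λ.powerset, S N B = 1)
    (hβ : ∀ N, 1 ≤ N → N ≤ #Λ → sectorMean Λ β (S N) N ≠ 0) (u : ℕ → 𝕜) :
    ∑ A ∈ Λ.powerset, u #A * ∑ B ∈ Λ.powerset,
      adsorptionDesorption Λ α β A B * sectorMixture Λ α β S B = 0 := by
  have h_top := sectorMean_card (hS_supp _ le_rfl) (hS_sum _ le_rfl) α
  calc
    _ = ∑ N ∈ range (#Λ + 1), sectorWeight Λ α β S N * ∑ A ∈ Λ.powerset, u #A *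
          ∑ B ∈ Λ.powerset, adsorptionDesorption Λ α β A B * S N B := by
      simp only [sum_mul_sectorMixture, mul_sum (range _)]
      rw [sum_comm]
      simp only [mul_left_comm (u _), mul_sum Λ.powerset (fun A ↦ u #A * _)]
    _ = ∑ N ∈ range (#Λ + 1), sectorWeight Λ α β S N *
          ((sectorMean Λ α (S #Λ) #Λ - sectorMean Λ α (S N) N) * (u (N + 1) - u N) -
            sectorMean Λ β (S N) N * (u N - u (N - 1))) := by
      refine sum_congr rfl fun N hN ↦ ?_
      have hN : N ≤ #Λ := mem_range_succ_iff.1 hN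
      rw [sum_card_mul_sum_adsorptionDesorption_mul (hS_supp N hN) (hS_sum N hN), h_top]
    _ = 0 := sum_range_mul_birthDeath_eq_zero
      (a := fun N ↦ sectorMean Λ α (S #Λ) #Λ - sectorMean Λ α (S N) N)
      (b := fun N ↦ sectorMean Λ β (S N) N)
      (fun n hn ↦ sectorWeight_succ_mul α (hβ _ n.succ_pos hn)) (sectorMean_zero ..) (sub_self _) u

theorem stmt6_general (Λ : Finset ι) (α β : ι → 𝕜) (M₀ : Finset ι → Finset ι → 𝕜)
    (S : ℕ → Finset ι → 𝕜)
    (hS_supp : ∀ N ≤ #Λ, ∀ B ∉ powersetCard N Λ, S N B = 0)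
    (hS_stat : ∀ N ≤ #Λ, ∀ A ∈ Λ.powerset, ∑ B ∈ Λ.powerset, M₀ A B * S N B = 0)
    (hS_sum : ∀ N ≤ #Λ, ∑ B ∈ Λ.powerset, S N B = 1)
    (hβ : ∀ N, 1 ≤ N → N ≤ #Λ → sectorMean Λ β (S N) N ≠ 0) :
    (∀ A ∈ Λ.powerset, ∑ B ∈ Λ.powerset, M₀ A B * sectorMixture Λ α β S B = 0) ∧
      ∀ N, ∑ A ∈ powersetCard N Λ, ∑ B ∈ Λ.powerset,
        adsorptionDesorption Λ α β A B * sectorMixture Λ α β S B = 0 := by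
  refine ⟨fun A hA ↦ ?_, fun N ↦ ?_⟩
  · rw [sum_mul_sectorMixture]
    exact sum_eq_zero fun N hN ↦ by rw [hS_stat N (mem_range_succ_iff.1 hN) A hA, mul_zero]
  · rw [powersetCard_eq_filter, sum_filter]
    simpa using sum_card_mul_adsorptionDesorption_sectorMixture hS_supp hS_sum hβ
      fun n ↦ if n = N then 1 else 0

end Mixture

theorem card_sites (L : ℕ) : #(sites L) = L := by
  simp [sites]

theorem sectorMixture_sites (L : ℕ) (α β : ℕ → ℝ) (S : ℕ → Finset ℕ → ℝ) :
    sectorMixture (sites L) α β S =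
      fun B ↦ ∑ N ∈ range (L + 1), pWeight L α β S N * S N B := by
  funext B
  simp only [sectorMixture, sectorWeight, card_sites]
  rfl

/-- for a particle-number-conserving Markov generator `M₀` with normalized
stationary states `S_0, ..., S_L` (`S_N` supported on `W_N`, `M₀ S_N = 0`, `∑ S_N = 1`),
if `B_N ≠ 0` for `1 ≤ N ≤ L` then `S = ∑_{N=0}^L p_N S_N` with
`p_N = ∏_{i=1}^N (A_L − A_{i−1})/B_i` satisfies `M₀ S = 0` and
`∑_{A ∈ W_N} (H S)(A) = 0` for every `0 ≤ N ≤ L`. -/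
theorem stmt6 (L : ℕ) (hL : 1 ≤ L) (α β : ℕ → ℝ)
    (M₀ : Finset ℕ → Finset ℕ → ℝ)
    (hcons : ∀ A B : Finset ℕ, A.card ≠ B.card → M₀ A B = 0)
    (hmarkov : ∀ B ∈ (sites L).powerset, ∑ A ∈ (sites L).powerset, M₀ A B = 0)
    (S : ℕ → Finset ℕ → ℝ)
    (hSsupp : ∀ N : ℕ, N ≤ L → ∀ B : Finset ℕ, B ∉ W L N → S N B = 0)
    (hSstat : ∀ N : ℕ, N ≤ L → ∀ A ∈ (sites L).powerset,
      ∑ B ∈ (sites L).powerset, M₀ A B * S N B = 0)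
    (hSnorm : ∀ N : ℕ, N ≤ L → ∑ B ∈ (sites L).powerset, S N B = 1)
    (hBne : ∀ N : ℕ, 1 ≤ N → N ≤ L → secExp L β S N ≠ 0) :
    (∀ A ∈ (sites L).powerset,
      ∑ B ∈ (sites L).powerset,
        M₀ A B * (∑ N ∈ Finset.range (L + 1), pWeight L α β S N * S N B) = 0) ∧
    (∀ N : ℕ, N ≤ L →
      ∑ A ∈ W L N,
        Hact L α β (fun B => ∑ N' ∈ Finset.range (L + 1), pWeight L α β S N' * S N' B) A
          = 0) := by
  have h := stmt6_general (sites L) α β M₀ S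
  rw [card_sites, sectorMixture_sites] at h
  exact (h hSsupp hSstat hSnorm hBne).imp_right fun hH N _ ↦ hH N
end

section
/- Let M_0 be a particle-number-conserving Markov generator with normalized stationary states S_0, ..., S_L as in the context, and let the rates be homogeneous: α_i = α > 0 and β_i = 1 for every site i. Then the vector S = (1+α)^{−L} ∑_{N=0}^{L} C(L,N) α^N S_N (where C(L,N) is the binomial coefficient) satisfies M_0 S = 0, ∑_A S(A) = 1, and ∑_{A ∈ W_N} (H S)(A) = 0 for every 0 ≤ N ≤ L. (This proves the conjecture of Phys. Rev. E 97, 032135 for the closed ASEP with infinitesimal Langmuir kinetics.) -/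
/-!
Under homogeneous rates the particle number is an autonomous birth-death chain: it jumps from `k`
to `k + 1` at rate `(L - k) α` and to `k - 1` at rate `k β`. Hence pairing `H S` with a function
of the particle number sees each `S_N` only through its total mass and its sector. What remains is
that the binomial weights `C(L,k) α^k β^(L-k)` are stationary for the chain: by detailed balance
the gain and loss terms telescope against each other.
-/

open Finset

section Binomial

variable {R : Type*} [CommSemiring R]

/-- The unnormalized weight of `k` occupied sites out of `L` when the occupied and empty states of
each site carry weights `a` and `b`. The truncated `L - k` is harmless: for `k > L` the
binomial coefficient vanishes. -/
def binomialWeight (L : ℕ) (a b : R) (k : ℕ) : R := L.choose k * a ^ k * b ^ (L - k)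

lemma sum_binomialWeight (L : ℕ) (a b : R) :
    ∑ k ∈ range (L + 1), binomialWeight L a b k = (a + b) ^ L := by
  rw [add_pow]
  exact sum_congr rfl fun k _ => by rw [binomialWeight]; ring

end Binomial

section BirthDeath

variable {R : Type*} [CommRing R]

/-- The backward generator of the birth-death chain with birth rate `(L - k) a` and death rate
`k b` in state `k`. At `k = 0` the truncated `k - 1` is harmless because the death rate is zero. -/
def birthDeathGen (L : ℕ) (a b : R) (φ : ℕ → R) (k : ℕ) : R :=
  (L - k) * a * (φ (k + 1) - φ k) + k * b * (φ (k - 1) - φ k)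

lemma binomialWeight_detailed_balance {L k : ℕ} (hk : k < L) (a b : R) :
    binomialWeight L a b (k + 1) * ((k + 1 : ℕ) * b) =
      binomialWeight L a b k * ((L - k) * a) := by
  have hchoose : (L.choose (k + 1) : R) * (k + 1 : ℕ) = L.choose k * (L - k) := by
    rw [← Nat.cast_sub hk.le]
    exact mod_cast congrArg (Nat.cast (R := R)) (Nat.choose_succ_right_eq L k)
  have hpow : b ^ (L - k) = b ^ (L - (k + 1)) * b := by
    rw [← pow_succ]
    congr 1
    omega
  simp only [binomialWeight, hpow]
  linear_combination a ^ (k + 1) * b ^ (L - (k + 1)) * b * hchoose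

lemma sum_binomialWeight_mul_birthDeathGen (L : ℕ) (a b : R) (φ : ℕ → R) :
    ∑ k ∈ range (L + 1), binomialWeight L a b k * birthDeathGen L a b φ k = 0 := by
  set w := binomialWeight L a b
  have hbirth : ∑ k ∈ range (L + 1), w k * ((L - k) * a * (φ (k + 1) - φ k)) =
      ∑ k ∈ range L, w k * ((L - k) * a) * (φ (k + 1) - φ k) := by
    simp [sum_range_succ, mul_assoc]
  have hdeath : ∑ k ∈ range (L + 1), w k * (k * b * (φ (k - 1) - φ k)) =
      ∑ k ∈ range L, w (k + 1) * ((k + 1 : ℕ) * b) * (φ k - φ (k + 1)) := by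
    simp [sum_range_succ', mul_assoc]
  simp only [birthDeathGen, mul_add, sum_add_distrib]
  rw [hbirth, hdeath, ← sum_add_distrib]
  refine sum_eq_zero fun k hk => ?_
  rw [binomialWeight_detailed_balance (mem_range.1 hk)]
  ring

end BirthDeath

section Generator

variable {L : ℕ} {A B : Finset ℕ}

lemma Hmat_self (α β : ℕ → ℝ) :
    Hmat L α β B B = -((∑ i ∈ sites L \ B, α i) + ∑ i ∈ B, β i) :=
  if_pos rfl

lemma Hmat_insert (α β : ℕ → ℝ) {i : ℕ} (hi : i ∉ B) : Hmat L α β (insert i B) B = α i := by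
  simp [Hmat, hi]

lemma Hmat_erase (α β : ℕ → ℝ) {i : ℕ} (hi : i ∈ B) : Hmat L α β (B.erase i) B = β i := by
  have hnot : ¬ B ⊆ B.erase i := fun h => notMem_erase i B (h hi)
  simp [Hmat, hi, hnot, erase_subset, sdiff_erase]

lemma Hmat_eq_zero (α β : ℕ → ℝ) (hne : A ≠ B) (hup : ¬ B ⋖ A) (hdown : ¬ A ⋖ B) :
    Hmat L α β A B = 0 := by
  rw [covBy_iff_card_sdiff_eq_one] at hup hdown
  rw [Hmat, if_neg hne, if_neg hup, if_neg hdown]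

lemma Hmat_eq_sum_jumps (α β : ℕ → ℝ) (hA : A ⊆ sites L) :
    Hmat L α β A B = (if A = B then Hmat L α β B B else 0) +
      ∑ i ∈ sites L \ B, (if A = insert i B then α i else 0) +
      ∑ i ∈ B, (if A = B.erase i then β i else 0) := by
  by_cases hup : B ⋖ A
  · obtain ⟨a, ha, rfl⟩ := covBy_iff_exists_insert.1 hup
    have haL : a ∈ sites L := hA (mem_insert_self a B)
    have hloss : ∑ i ∈ B, (if insert a B = B.erase i then β i else 0) = 0 :=
      sum_eq_zero fun i hi => if_neg ((erase_ssubset hi).trans hup.lt).ne'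
    rw [hloss, if_neg hup.ne', Hmat_insert α β ha]
    simp [insert_inj ha, haL, ha]
  have hgain : ∑ i ∈ sites L \ B, (if A = insert i B then α i else 0) = 0 :=
    sum_eq_zero fun i hi => if_neg fun h => hup (by rw [h]; exact covBy_insert (mem_sdiff.1 hi).2)
  by_cases hdown : A ⋖ B
  · obtain ⟨b, hb, rfl⟩ := covBy_iff_exists_erase.1 hdown
    rw [hgain, if_neg hdown.ne, Hmat_erase α β hb]
    simp [erase_inj B hb, hb]
  have hloss : ∑ i ∈ B, (if A = B.erase i then β i else 0) = 0 :=
    sum_eq_zero fun i hi => if_neg fun h => hdown (by rw [h]; exact erase_covBy hi)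
  rw [hgain, hloss, add_zero, add_zero]
  split_ifs with hAB
  · rw [hAB]
  · exact Hmat_eq_zero α β hAB hup hdown

/-- The backward (dual) action of the adsorption/desorption generator: the expected rate of change
of the observable `g` in configuration `B`. -/
def backwardGen (L : ℕ) (α β : ℕ → ℝ) (g : Finset ℕ → ℝ) (B : Finset ℕ) : ℝ :=
  ∑ i ∈ sites L \ B, α i * (g (insert i B) - g B) + ∑ i ∈ B, β i * (g (B.erase i) - g B)

lemma sum_mul_Hmat (α β : ℕ → ℝ) (g : Finset ℕ → ℝ) (hB : B ⊆ sites L) :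
    ∑ A ∈ (sites L).powerset, g A * Hmat L α β A B = backwardGen L α β g B := by
  have hpoint {C : Finset ℕ} (hC : C ⊆ sites L) (r : ℝ) :
      ∑ A ∈ (sites L).powerset, g A * (if A = C then r else 0) = g C * r := by
    simp [hC]
  have hbirth : ∑ A ∈ (sites L).powerset, g A *
      ∑ i ∈ sites L \ B, (if A = insert i B then α i else 0) =
      ∑ i ∈ sites L \ B, g (insert i B) * α i := by
    simp only [mul_sum]
    rw [sum_comm]
    exact sum_congr rfl fun i hi => hpoint (insert_subset (mem_sdiff.1 hi).1 hB) _
  have hdeath : ∑ A ∈ (sites L).powerset, g A *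
      ∑ i ∈ B, (if A = B.erase i then β i else 0) = ∑ i ∈ B, g (B.erase i) * β i := by
    simp only [mul_sum]
    rw [sum_comm]
    exact sum_congr rfl fun i _ => hpoint ((erase_subset i B).trans hB) _
  rw [sum_congr rfl fun A hA => by rw [Hmat_eq_sum_jumps α β (mem_powerset.1 hA)]]
  simp only [mul_add, sum_add_distrib]
  rw [hpoint hB, hbirth, hdeath, Hmat_self]
  simp only [backwardGen, mul_sub, sum_sub_distrib, ← sum_mul, mul_comm (g _)]
  ring

lemma sum_mul_Hact (α β : ℕ → ℝ) (g f : Finset ℕ → ℝ) :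
    ∑ A ∈ (sites L).powerset, g A * Hact L α β f A =
      ∑ B ∈ (sites L).powerset, backwardGen L α β g B * f B := by
  simp only [Hact, mul_sum, ← mul_assoc]
  rw [sum_comm]
  refine sum_congr rfl fun B hB => ?_
  rw [← sum_mul, sum_mul_Hmat α β g (mem_powerset.1 hB)]

lemma backwardGen_comp_card (a b : ℝ) (φ : ℕ → ℝ) (hB : B ⊆ sites L) :
    backwardGen L (fun _ => a) (fun _ => b) (fun A => φ #A) B = birthDeathGen L a b φ #B := by
  have hempty : (#(sites L \ B) : ℝ) = L - #B := by
    rw [cast_card_sdiff hB, sites, Nat.card_Icc, Nat.add_sub_cancel]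
  have hbirth : ∑ i ∈ sites L \ B, a * (φ #(insert i B) - φ #B) =
      (L - #B) * a * (φ (#B + 1) - φ #B) := by
    rw [sum_congr rfl fun i hi => by rw [card_insert_of_notMem (mem_sdiff.1 hi).2], sum_const,
      nsmul_eq_mul, hempty, mul_assoc]
  have hdeath : ∑ i ∈ B, b * (φ #(B.erase i) - φ #B) = #B * b * (φ (#B - 1) - φ #B) := by
    rw [sum_congr rfl fun i hi => by rw [card_erase_of_mem hi], sum_const, nsmul_eq_mul, mul_assoc]
  rw [backwardGen, hbirth, hdeath, birthDeathGen]

end Generator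

section Mixture

variable {L : ℕ} {a b : ℝ} {S : ℕ → Finset ℕ → ℝ}

/-- The normalized binomial mixture of the sector states `S 0, ..., S L`. -/
noncomputable def binomialMixture (L : ℕ) (a b : ℝ) (S : ℕ → Finset ℕ → ℝ) (B : Finset ℕ) : ℝ :=
  ((a + b) ^ L)⁻¹ * ∑ N ∈ range (L + 1), binomialWeight L a b N * S N B

lemma sum_mul_binomialMixture (s : Finset (Finset ℕ)) (g : Finset ℕ → ℝ) :
    ∑ B ∈ s, g B * binomialMixture L a b S B =
      ((a + b) ^ L)⁻¹ * ∑ N ∈ range (L + 1), binomialWeight L a b N * ∑ B ∈ s, g B * S N B := by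
  simp only [binomialMixture, mul_sum]
  rw [sum_comm]
  exact sum_congr rfl fun _ _ => sum_congr rfl fun _ _ => by ring

lemma sum_binomialMixture (hab : a + b ≠ 0) {s : Finset (Finset ℕ)}
    (hnorm : ∀ N ≤ L, ∑ B ∈ s, S N B = 1) : ∑ B ∈ s, binomialMixture L a b S B = 1 := by
  have hlin := sum_mul_binomialMixture (L := L) (a := a) (b := b) (S := S) s fun _ => 1
  simp only [one_mul] at hlin
  have hmass : ∑ N ∈ range (L + 1), binomialWeight L a b N * ∑ B ∈ s, S N B = (a + b) ^ L := by
    rw [← sum_binomialWeight]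
    exact sum_congr rfl fun N hN => by rw [hnorm N (mem_range_succ_iff.1 hN), mul_one]
  rw [hlin, hmass, inv_mul_cancel₀ (pow_ne_zero L hab)]

lemma sum_comp_card_mul_of_forall_notMem_W {N : ℕ} {f : Finset ℕ → ℝ}
    (hsupp : ∀ B, B ∉ W L N → f B = 0)
    (hnorm : ∑ B ∈ (sites L).powerset, f B = 1) (ψ : ℕ → ℝ) :
    ∑ B ∈ (sites L).powerset, ψ #B * f B = ψ N := by
  rw [← mul_one (ψ N), ← hnorm, mul_sum]
  refine sum_congr rfl fun B _ => ?_
  by_cases hB : B ∈ W L N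
  · rw [(mem_powersetCard.1 hB).2]
  · rw [hsupp B hB, mul_zero, mul_zero]

lemma sum_comp_card_mul_Hact_binomialMixture
    (hsupp : ∀ N ≤ L, ∀ B, B ∉ W L N → S N B = 0)
    (hnorm : ∀ N ≤ L, ∑ B ∈ (sites L).powerset, S N B = 1) (φ : ℕ → ℝ) :
    ∑ A ∈ (sites L).powerset,
      φ #A * Hact L (fun _ => a) (fun _ => b) (binomialMixture L a b S) A = 0 := by
  calc
    _ = ∑ B ∈ (sites L).powerset, birthDeathGen L a b φ #B * binomialMixture L a b S B := by
      rw [sum_mul_Hact]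
      exact sum_congr rfl fun B hB => by rw [backwardGen_comp_card a b φ (mem_powerset.1 hB)]
    _ = ((a + b) ^ L)⁻¹ *
        ∑ N ∈ range (L + 1), binomialWeight L a b N * birthDeathGen L a b φ N := by
      rw [sum_mul_binomialMixture]
      congr 1
      refine sum_congr rfl fun N hN => ?_
      have hN : N ≤ L := mem_range_succ_iff.1 hN
      rw [sum_comp_card_mul_of_forall_notMem_W (hsupp N hN) (hnorm N hN)]
    _ = 0 := by rw [sum_binomialWeight_mul_birthDeathGen, mul_zero]

lemma sum_W_eq_sum_powerset_ite_mul (N : ℕ) (f : Finset ℕ → ℝ) :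
    ∑ A ∈ W L N, f A = ∑ A ∈ (sites L).powerset, (if #A = N then 1 else 0) * f A := by
  simp only [W, powersetCard_eq_filter, sum_filter, ite_mul, one_mul, zero_mul]

end Mixture

theorem stmt7_general (L : ℕ) {α β : ℝ} (hαβ : α + β ≠ 0) (M₀ : Finset ℕ → Finset ℕ → ℝ)
    (S : ℕ → Finset ℕ → ℝ)
    (hSsupp : ∀ N ≤ L, ∀ B : Finset ℕ, B ∉ W L N → S N B = 0)
    (hSstat : ∀ N ≤ L, ∀ A ∈ (sites L).powerset,
      ∑ B ∈ (sites L).powerset, M₀ A B * S N B = 0)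
    (hSnorm : ∀ N ≤ L, ∑ B ∈ (sites L).powerset, S N B = 1) :
    (∀ A ∈ (sites L).powerset,
      ∑ B ∈ (sites L).powerset, M₀ A B * binomialMixture L α β S B = 0) ∧
    (∑ A ∈ (sites L).powerset, binomialMixture L α β S A = 1) ∧
    (∀ N : ℕ, ∑ A ∈ W L N,
      Hact L (fun _ => α) (fun _ => β) (binomialMixture L α β S) A = 0) := by
  refine ⟨fun A hA => ?_, sum_binomialMixture hαβ hSnorm, fun N => ?_⟩
  · rw [sum_mul_binomialMixture, sum_eq_zero, mul_zero]
    exact fun N hN => by rw [hSstat N (mem_range_succ_iff.1 hN) A hA, mul_zero]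
  · rw [sum_W_eq_sum_powerset_ite_mul]
    exact sum_comp_card_mul_Hact_binomialMixture hSsupp hSnorm fun n => if n = N then 1 else 0

/-- for a particle-number-conserving Markov generator `M₀` with normalized
stationary states `S_0, ..., S_L` and homogeneous rates `α_i = α > 0`, `β_i = 1`, the
vector `S = (1+α)^{−L} ∑_{N=0}^L C(L,N) α^N S_N` satisfies `M₀ S = 0`, `∑_A S(A) = 1`,
and `∑_{A ∈ W_N} (H S)(A) = 0` for every `0 ≤ N ≤ L`
(the conjecture of Phys. Rev. E 97, 032135). -/
theorem stmt7 (L : ℕ) (hL : 1 ≤ L) (α : ℝ) (hα : 0 < α)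
    (M₀ : Finset ℕ → Finset ℕ → ℝ)
    (hcons : ∀ A B : Finset ℕ, A.card ≠ B.card → M₀ A B = 0)
    (hmarkov : ∀ B ∈ (sites L).powerset, ∑ A ∈ (sites L).powerset, M₀ A B = 0)
    (S : ℕ → Finset ℕ → ℝ)
    (hSsupp : ∀ N : ℕ, N ≤ L → ∀ B : Finset ℕ, B ∉ W L N → S N B = 0)
    (hSstat : ∀ N : ℕ, N ≤ L → ∀ A ∈ (sites L).powerset,
      ∑ B ∈ (sites L).powerset, M₀ A B * S N B = 0)
    (hSnorm : ∀ N : ℕ, N ≤ L → ∑ B ∈ (sites L).powerset, S N B = 1) :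
    (∀ A ∈ (sites L).powerset,
      ∑ B ∈ (sites L).powerset,
        M₀ A B * (((1 + α) ^ L)⁻¹ *
          ∑ N ∈ Finset.range (L + 1), (L.choose N : ℝ) * α ^ N * S N B) = 0) ∧
    (∑ A ∈ (sites L).powerset,
      ((1 + α) ^ L)⁻¹ * ∑ N ∈ Finset.range (L + 1), (L.choose N : ℝ) * α ^ N * S N A
        = 1) ∧
    (∀ N : ℕ, N ≤ L →
      ∑ A ∈ W L N,
        Hact L (fun _ => α) (fun _ => 1)
          (fun B => ((1 + α) ^ L)⁻¹ *
            ∑ N' ∈ Finset.range (L + 1), (L.choose N' : ℝ) * α ^ N' * S N' B) A = 0) := by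
  obtain ⟨hker, hsum, hH⟩ := stmt7_general L (β := 1) (by positivity) M₀ S hSsupp hSstat hSnorm
  unfold binomialMixture at hker hsum hH
  simp only [binomialWeight, one_pow, mul_one, add_comm α] at hker hsum hH
  exact ⟨hker, hsum, fun N _ => hH N⟩
end

section
/- Fix integers L ≥ 1, 0 ≤ N ≤ L and a real number q. For an N-element subset B = {n_1 < n_2 < ... < n_N} of {1,...,L} define f(B) = q^{w(B)} with w(B) = ∑_{j=1}^{N} (L − j + 1 − n_j). Then f is a stationary state of the closed ASEP generator M_0 restricted to the N-particle sector: for every N-element subset A, (M_0 f)(A) = 0. -/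
/-!
The weight `f(B) = q ^ w(B)` satisfies detailed balance: a hop from `i` to `i + 1` lowers `w` by
exactly `1`, so the flow `f(B)` of that hop equals the flow `q * f(B')` of the reverse hop. The
in- and outflow of a configuration then cancel separately across each bond `{i, i + 1}`.

At `q = 0` the identity `q ^ (w + 1) = q * q ^ w` needs `w ≠ -1`. In fact `0 ≤ w(B)`, because `N`
distinct integers that are at most `L` have sum at most `L + (L - 1) + ⋯ + (L - N + 1)`.
-/

open Finset

/-- The exponent `w(B) = ∑_{j=1}^N (L − j + 1 − n_j)` for `B = {n_1 < ... < n_N}`,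
written as `∑_{n ∈ B} (L + 1 − n) − ∑_{j=1}^N j`. -/
def wgt (L : ℕ) (B : Finset ℕ) : ℤ :=
  (∑ n ∈ B, ((L : ℤ) + 1 - (n : ℤ))) - ((B.card * (B.card + 1)) / 2 : ℕ)

/-- The closed ASEP generator with asymmetry parameter `q`: for each `1 ≤ i ≤ L−1` a
rightward hop `B → (B∖{i})∪{i+1}` at rate `1` when `i ∈ B`, `i+1 ∉ B`, and a leftward hop
`B → (B∖{i+1})∪{i}` at rate `q` when `i+1 ∈ B`, `i ∉ B`; off-diagonal entries are total
transition rates and the diagonal entry is minus the total exit rate. -/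
noncomputable def M0asep (L : ℕ) (q : ℝ) (A B : Finset ℕ) : ℝ :=
  if A = B then
    -((((Finset.Icc 1 (L - 1)).filter fun i => i ∈ B ∧ i + 1 ∉ B).card : ℝ)
      + q * (((Finset.Icc 1 (L - 1)).filter fun i => i ∉ B ∧ i + 1 ∈ B).card : ℝ))
  else
    ∑ i ∈ Finset.Icc 1 (L - 1),
      ((if i ∈ B ∧ i + 1 ∉ B ∧ A = insert (i + 1) (B.erase i) then (1 : ℝ) else 0)
        + (if i + 1 ∈ B ∧ i ∉ B ∧ A = insert i (B.erase (i + 1)) then q else 0))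

section Hop

variable {α : Type*} [DecidableEq α] {i j : α} {A B s : Finset α}

/-- The configuration obtained from `B` by moving a particle from site `i` to site `j`. It is meant
for `i ∈ B` and `j ∉ B`; otherwise the number of particles need not be preserved. -/
def hop (i j : α) (B : Finset α) : Finset α := insert j (B.erase i)

theorem hop_hop (hi : i ∈ B) (hj : j ∉ B) : hop j i (hop i j B) = B := by
  rw [hop, hop, erase_insert (fun h => hj (mem_of_mem_erase h)), insert_erase hi]

theorem mem_hop : j ∈ hop i j B := mem_insert_self j _

theorem notMem_hop (hi : i ∈ B) (hj : j ∉ B) : i ∉ hop i j B := by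
  simp [hop, ne_of_mem_of_not_mem hi hj]

theorem hop_ne (hj : j ∉ B) : hop i j B ≠ B := fun h => hj (h ▸ mem_hop)

theorem hop_subset (hB : B ⊆ s) (hj : j ∈ s) : hop i j B ⊆ s :=
  insert_subset hj ((erase_subset i B).trans hB)

theorem card_hop (hi : i ∈ B) (hj : j ∉ B) : #(hop i j B) = #B := by
  rw [hop, card_insert_of_notMem (fun h => hj (mem_of_mem_erase h)), card_erase_add_one hi]

theorem sum_hop {M : Type*} [AddCommGroup M] (hi : i ∈ B) (hj : j ∉ B) (f : α → M) :
    ∑ n ∈ hop i j B, f n = ∑ n ∈ B, f n - f i + f j := by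
  rw [hop, sum_insert (fun h => hj (mem_of_mem_erase h)), sum_erase_eq_sub hi, add_comm]

theorem eq_hop_iff_eq_hop : i ∈ B ∧ j ∉ B ∧ A = hop i j B ↔ B = hop j i A ∧ j ∈ A ∧ i ∉ A := by
  constructor
  · rintro ⟨hi, hj, rfl⟩
    exact ⟨(hop_hop hi hj).symm, mem_hop, notMem_hop hi hj⟩
  · rintro ⟨rfl, hj, hi⟩
    exact ⟨mem_hop, notMem_hop hj hi, (hop_hop hj hi).symm⟩

theorem sum_powerset_ite_eq_hop_mul {R : Type*} [NonUnitalNonAssocSemiring R] (hA : A ⊆ s)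
    (hi : i ∈ s) (c : R) (f : Finset α → R) :
    ∑ B ∈ s.powerset, (if i ∈ B ∧ j ∉ B ∧ A = hop i j B then c else 0) * f B =
      if j ∈ A ∧ i ∉ A then c * f (hop j i A) else 0 := by
  have h_mem : hop j i A ∈ s.powerset := mem_powerset.2 (hop_subset hA hi)
  simp only [eq_hop_iff_eq_hop, ite_and (_ = _), ite_mul, zero_mul, sum_ite_eq', h_mem, if_true]

end Hop

section Generator

variable {L : ℕ} {q : ℝ} {A : Finset ℕ} {f : Finset ℕ → ℝ}

theorem mem_sites_of_mem_Icc {i : ℕ} (hi : i ∈ Icc 1 (L - 1)) :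
    i ∈ sites L ∧ i + 1 ∈ sites L := by
  simp only [sites, mem_Icc] at hi ⊢
  omega

/-- The total rate of hops from `B` to `A` in the closed ASEP on `L` sites. -/
noncomputable def hopRate (L : ℕ) (q : ℝ) (A B : Finset ℕ) : ℝ :=
  ∑ i ∈ Icc 1 (L - 1),
    ((if i ∈ B ∧ i + 1 ∉ B ∧ A = hop i (i + 1) B then 1 else 0) +
      (if i + 1 ∈ B ∧ i ∉ B ∧ A = hop (i + 1) i B then q else 0))

/-- The total rate of hops out of `A` in the closed ASEP on `L` sites, as a sum over bonds so that
it can be compared with `hopRate` bond by bond. -/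
noncomputable def exitRate (L : ℕ) (q : ℝ) (A : Finset ℕ) : ℝ :=
  ∑ i ∈ Icc 1 (L - 1),
    ((if i ∈ A ∧ i + 1 ∉ A then 1 else 0) + (if i + 1 ∈ A ∧ i ∉ A then q else 0))

theorem hopRate_self (L : ℕ) (q : ℝ) (A : Finset ℕ) : hopRate L q A A = 0 := by
  have no_hop (i j : ℕ) : ¬(i ∈ A ∧ j ∉ A ∧ A = hop i j A) := fun h => hop_ne h.2.1 h.2.2.symm
  simp only [hopRate, no_hop, if_false, add_zero, sum_const_zero]

theorem M0asep_self (L : ℕ) (q : ℝ) (A : Finset ℕ) : M0asep L q A A = -exitRate L q A := by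
  simp only [M0asep, exitRate, if_true, sum_add_distrib, ← sum_filter, sum_const, nsmul_eq_mul,
    mul_one, and_comm, mul_comm q]

theorem M0asep_eq_hopRate_sub (L : ℕ) (q : ℝ) (A B : Finset ℕ) :
    M0asep L q A B = hopRate L q A B - if A = B then exitRate L q A else 0 := by
  split_ifs with h
  · rw [← h, M0asep_self, hopRate_self, zero_sub]
  · rw [M0asep, if_neg h, sub_zero]
    rfl

theorem sum_hopRate_mul (hA : A ⊆ sites L) (q : ℝ) (f : Finset ℕ → ℝ) :
    ∑ B ∈ (sites L).powerset, hopRate L q A B * f B =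
      ∑ i ∈ Icc 1 (L - 1),
        ((if i + 1 ∈ A ∧ i ∉ A then f (hop (i + 1) i A) else 0) +
          (if i ∈ A ∧ i + 1 ∉ A then q * f (hop i (i + 1) A) else 0)) := by
  simp only [hopRate, sum_mul, add_mul]
  rw [sum_comm]
  refine sum_congr rfl fun i hi => ?_
  obtain ⟨hi, hi'⟩ := mem_sites_of_mem_Icc hi
  rw [sum_add_distrib, sum_powerset_ite_eq_hop_mul hA hi, sum_powerset_ite_eq_hop_mul hA hi',
    one_mul]

theorem sum_M0asep_mul (hA : A ⊆ sites L) (q : ℝ) (f : Finset ℕ → ℝ) :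
    ∑ B ∈ (sites L).powerset, M0asep L q A B * f B =
      ∑ B ∈ (sites L).powerset, hopRate L q A B * f B - exitRate L q A * f A := by
  simp only [M0asep_eq_hopRate_sub, sub_mul, sum_sub_distrib, ite_mul, zero_mul, sum_ite_eq,
    mem_powerset.2 hA, if_true]

/-- Detailed balance of `f` with respect to the closed ASEP on `L` sites: across every bond, the
flow `f B` of a rightward hop out of `B` equals the flow of the reverse leftward hop. -/
def DetailedBalance (L : ℕ) (q : ℝ) (f : Finset ℕ → ℝ) : Prop :=
  ∀ B ⊆ sites L, ∀ i ∈ B, i + 1 ∈ sites L → i + 1 ∉ B → f B = q * f (hop i (i + 1) B)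

theorem DetailedBalance.sum_M0asep_mul_eq_zero (hf : DetailedBalance L q f) (hA : A ⊆ sites L) :
    ∑ B ∈ (sites L).powerset, M0asep L q A B * f B = 0 := by
  rw [sum_M0asep_mul hA, sum_hopRate_mul hA, exitRate, sum_mul, sub_eq_zero]
  refine sum_congr rfl fun i hi => ?_
  obtain ⟨hi, hi'⟩ := mem_sites_of_mem_Icc hi
  have h_left (h : i + 1 ∈ A ∧ i ∉ A) : f (hop (i + 1) i A) = q * f A := by
    simpa only [hop_hop h.1 h.2] using
      hf (hop (i + 1) i A) (hop_subset hA hi) i mem_hop hi' (notMem_hop h.1 h.2)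
  have h_right (h : i ∈ A ∧ i + 1 ∉ A) : q * f (hop i (i + 1) A) = f A :=
    (hf A hA i h.1 hi' h.2).symm
  split_ifs with h h' h'
  · exact absurd h'.1 h.2
  · rw [h_left h, add_zero, zero_add]
  · rw [h_right h', zero_add, add_zero, one_mul]
  · rw [add_zero, zero_mul]

end Generator

section Weight

variable {L i : ℕ} {B : Finset ℕ}

theorem wgt_eq_sum_range_sub_sum (L : ℕ) (B : Finset ℕ) :
    wgt L B = ∑ k ∈ range #B, ((L : ℤ) - k) - ∑ n ∈ B, (n : ℤ) := by
  have h_triangle : ((#B * (#B + 1) / 2 : ℕ) : ℤ) = ∑ k ∈ range #B, ((k : ℤ) + 1) := by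
    have := sum_range_id (#B + 1)
    rw [sum_range_succ', add_zero, add_tsub_cancel_right, mul_comm] at this
    exact_mod_cast this.symm
  rw [wgt, h_triangle]
  simp only [sum_sub_distrib, sum_add_distrib, sum_const, card_range]
  ring

theorem wgt_nonneg (hB : ∀ n ∈ B, n ≤ L) : 0 ≤ wgt L B := by
  rw [wgt_eq_sum_range_sub_sum, sub_nonneg]
  simpa using sum_le_sum_range (s := B.map Nat.castEmbedding) (c := L) (by simpa using hB)

theorem wgt_hop_add_one (L : ℕ) (hi : i ∈ B) (hi' : i + 1 ∉ B) :
    wgt L (hop i (i + 1) B) + 1 = wgt L B := by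
  rw [wgt_eq_sum_range_sub_sum, wgt_eq_sum_range_sub_sum, card_hop hi hi', sum_hop hi hi']
  push_cast
  ring

theorem detailedBalance_zpow_wgt (L : ℕ) (q : ℝ) : DetailedBalance L q fun B => q ^ wgt L B := by
  intro B hB i hi h_site hi'
  have h_nonneg : 0 ≤ wgt L (hop i (i + 1) B) :=
    wgt_nonneg fun n hn => (mem_Icc.1 (hop_subset hB h_site hn)).2
  have h_ne : wgt L (hop i (i + 1) B) + 1 ≠ 0 := by omega
  simp only [← wgt_hop_add_one L hi hi', zpow_add' (.inr (.inl h_ne)), zpow_one, mul_comm q]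

end Weight

/-- `f(B) = q^{w(B)}` is stationary for the closed ASEP restricted to the
`N`-particle sector: `(M₀ f)(A) = 0` for every `N`-element subset `A` of `{1,...,L}`. -/
theorem stmt8 (L N : ℕ) (hL : 1 ≤ L) (hN : N ≤ L) (q : ℝ) :
    ∀ A ∈ W L N,
      ∑ B ∈ (sites L).powerset, M0asep L q A B * q ^ wgt L B = 0 := by
  intro A hA
  exact (detailedBalance_zpow_wgt L q).sum_M0asep_mul_eq_zero (mem_powersetCard.1 hA).1
end
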